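/- Let ρ > 0, c > 0 and let H₁, H₂, λ be real numbers, and set c_A² := (H₁² + H₂²)/ρ. Let B₀ be the symmetric 6×6 real matrix with rows (1/(ρc²), λH₁/c², λH₂/c², 0, 0, 0), (λH₁/c², ρ, 0, −ρλ, 0, 0), (λH₂/c², 0, ρ, 0, −ρλ, 0), (0, −ρλ, 0, 1, 0, 0), (0, 0, −ρλ, 0, 1, 0), (0, 0, 0, 0, 0, 1). Then B₀ is positive definite if and only if ρλ² < 1/(1 + c_A²/c²). -/

import Mathlib

/-!
The block of `B₀` in the pressure, the magnetic field and the entropy is diagonal and positive, so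
`B₀` is positive definite if and only if its Schur complement on the velocities is. The latter is
`ρ (1 - ρλ²) I - (ρλ²/c²) H Hᵀ`. The smallest eigenvalue of this rank-one perturbation of a scalar
matrix belongs to the direction of `H` and equals `ρ (1 - ρλ² (1 + c_A²/c²))`.
-/

open Matrix

section PosDef

theorem posDef_submatrix_equiv_iff {m n R : Type*} [Ring R] [PartialOrder R] [StarRing R]
    {M : Matrix n n R} (e : m ≃ n) : (M.submatrix e e).PosDef ↔ M.PosDef :=
  ⟨fun h => by simpa using h.submatrix e.symm.injective, fun h => h.submatrix e.injective⟩

theorem posDef_fromBlocks₁₁_iff {m n R : Type*} [Fintype m] [DecidableEq m] [Finite n]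
    [CommRing R] [PartialOrder R] [StarRing R] [StarOrderedRing R] {A : Matrix m m R}
    (B : Matrix m n R) (D : Matrix n n R) (hA : A.PosDef) [Invertible A] :
    (fromBlocks A B Bᴴ D).PosDef ↔ (D - Bᴴ * A⁻¹ * B).PosDef := by
  have := Fintype.ofFinite n
  rw [posDef_iff_dotProduct_mulVec, posDef_iff_dotProduct_mulVec (M := D - _),
    IsHermitian.fromBlocks₁₁ _ _ hA.isHermitian]
  refine and_congr_right fun _ => ⟨fun h y hy => ?_, fun h z hz => ?_⟩
  · have hne : Sum.elim (-((A⁻¹ * B) *ᵥ y)) y ≠ 0 := fun h0 =>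
      hy (funext fun i => congrFun h0 (Sum.inr i))
    simpa only [dotProduct_mulVec, schur_complement_eq₁₁ B D _ _ hA.isHermitian, neg_add_cancel,
      dotProduct_zero, zero_add] using h hne
  · obtain ⟨x, y, rfl⟩ : ∃ x y, z = Sum.elim x y := ⟨_, _, (Sum.elim_comp_inl_inr z).symm⟩
    rw [dotProduct_mulVec, schur_complement_eq₁₁ B D _ _ hA.isHermitian, ← dotProduct_mulVec,
      ← dotProduct_mulVec]
    obtain rfl | hy := eq_or_ne y 0
    · have hx : x ≠ 0 := by
        rintro rfl
        exact hz Sum.elim_zero_zero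
      simpa only [mulVec_zero, add_zero, dotProduct_zero] using hA.dotProduct_mulVec_pos hx
    · exact add_pos_of_nonneg_of_pos (hA.posSemidef.dotProduct_mulVec_nonneg _) (h hy)

variable {n : Type*} [Fintype n] [DecidableEq n]

theorem dotProduct_smul_one_sub_smul_vecMulVec_mulVec {R : Type*} [CommRing R] (a b : R)
    (v x : n → R) :
    x ⬝ᵥ ((a • (1 : Matrix n n R) - b • vecMulVec v v) *ᵥ x) =
      a * (x ⬝ᵥ x) - b * (v ⬝ᵥ x) ^ 2 := by
  simp only [sub_mulVec, smul_mulVec, one_mulVec, vecMulVec_mulVec, dotProduct_sub,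
    dotProduct_smul, smul_eq_mul, op_smul_eq_smul, dotProduct_comm x v]
  ring

theorem posDef_smul_one_sub_smul_vecMulVec_iff [Nonempty n] {a b : ℝ} (hb : 0 ≤ b) (v : n → ℝ) :
    (a • (1 : Matrix n n ℝ) - b • vecMulVec v v).PosDef ↔ b * (v ⬝ᵥ v) < a := by
  constructor
  · intro h
    obtain rfl | hv := eq_or_ne v 0
    · simpa using h.diag_pos (i := Classical.arbitrary n)
    · have hvv : 0 < v ⬝ᵥ v := dotProduct_star_self_pos_iff.2 hv
      have hpos := h.dotProduct_mulVec_pos hv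
      rw [star_trivial, dotProduct_smul_one_sub_smul_vecMulVec_mulVec] at hpos
      exact lt_of_mul_lt_mul_right (by linarith) hvv.le
  · intro h
    refine .of_dotProduct_mulVec_pos ?_ fun x hx => ?_
    · ext i j
      simp [one_apply, vecMulVec_apply, mul_comm, eq_comm]
    · have hxx : 0 < x ⬝ᵥ x := dotProduct_star_self_pos_iff.2 hx
      have cauchy_schwarz : (v ⬝ᵥ x) ^ 2 ≤ (v ⬝ᵥ v) * (x ⬝ᵥ x) := by
        simpa only [dotProduct, sq] using Finset.sum_mul_sq_le_sq_mul_sq Finset.univ v x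
      rw [star_trivial, dotProduct_smul_one_sub_smul_vecMulVec_mulVec, sub_pos]
      calc b * (v ⬝ᵥ x) ^ 2 ≤ b * ((v ⬝ᵥ v) * (x ⬝ᵥ x)) := by gcongr
        _ = b * (v ⬝ᵥ v) * (x ⬝ᵥ x) := (mul_assoc _ _ _).symm
        _ < a * (x ⬝ᵥ x) := by gcongr

end PosDef

theorem lt_one_div_one_add_div_div_iff {K : Type*} [Field K] [LinearOrder K]
    [IsStrictOrderedRing K] {x h r k : K} (hh : 0 ≤ h) (hr : 0 < r) (hk : 0 < k) :
    x < 1 / (1 + h / r / k) ↔ x / k * h < r * (1 - x) := by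
  have hden : 0 < 1 + h / r / k := by positivity
  have hexpand : r * (x * (1 + h / r / k)) = r * x + x / k * h := by field_simp
  rw [lt_div_iff₀ hden, ← mul_lt_mul_iff_right₀ hr, hexpand, mul_sub, lt_sub_iff_add_lt']

section MHD

variable {n : Type*} [DecidableEq n]

/-- The diagonal block of `B₀` in the variables other than the velocity; the index type
`Unit ⊕ n ⊕ Unit` stands for pressure, magnetic field and entropy. -/
noncomputable def thermoMagneticBlock (n : Type*) [DecidableEq n] (ρ c : ℝ) :
    Matrix (Unit ⊕ n ⊕ Unit) (Unit ⊕ n ⊕ Unit) ℝ :=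
  diagonal (Sum.elim (fun _ => 1 / (ρ * c ^ 2)) fun _ => 1)

/-- The block of `B₀` coupling pressure, magnetic field and entropy (rows) to the velocity
(columns). -/
noncomputable def velocityCoupling (ρ c lam : ℝ) (H : n → ℝ) : Matrix (Unit ⊕ n ⊕ Unit) n ℝ :=
  fromRows (replicateRow Unit ((lam / c ^ 2) • H)) (fromRows (-(ρ * lam) • 1) 0)

/-- The matrix `B₀` of the secondary symmetrization of compressible MHD in an arbitrary space
dimension, with `n` indexing the space directions. The variables are ordered as pressure, magnetic
field, entropy, velocity, so that the block to be eliminated comes first. -/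
noncomputable def symmetrizedTimeMatrix (ρ c lam : ℝ) (H : n → ℝ) :
    Matrix ((Unit ⊕ n ⊕ Unit) ⊕ n) ((Unit ⊕ n ⊕ Unit) ⊕ n) ℝ :=
  fromBlocks (thermoMagneticBlock n ρ c) (velocityCoupling ρ c lam H)
    (velocityCoupling ρ c lam H)ᴴ (ρ • 1)

theorem posDef_thermoMagneticBlock {ρ c : ℝ} (hρ : 0 < ρ) (hc : c ≠ 0) :
    (thermoMagneticBlock n ρ c).PosDef := by
  refine .diagonal ?_
  rintro (_ | _)
  · exact one_div_pos.2 (by positivity)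
  · exact one_pos

variable [Fintype n]

theorem inv_thermoMagneticBlock {ρ c : ℝ} (hρ : ρ ≠ 0) (hc : c ≠ 0) :
    (thermoMagneticBlock n ρ c)⁻¹ = diagonal (Sum.elim (fun _ => ρ * c ^ 2) fun _ => 1) := by
  refine inv_eq_left_inv ?_
  rw [thermoMagneticBlock, diagonal_mul_diagonal, ← diagonal_one]
  congr 1
  ext (_ | _)
  · exact mul_one_div_cancel (mul_ne_zero hρ (pow_ne_zero 2 hc))
  · exact one_mul 1

theorem conjTranspose_velocityCoupling_mul_diagonal_mul (ρ c lam a : ℝ) (H : n → ℝ) :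
    (velocityCoupling ρ c lam H)ᴴ *
        diagonal (Sum.elim (fun _ : Unit => a) (fun _ : n ⊕ Unit => 1)) *
        velocityCoupling ρ c lam H =
      (a * (lam / c ^ 2) ^ 2) • vecMulVec H H + (ρ * lam) ^ 2 • (1 : Matrix n n ℝ) := by
  simp only [velocityCoupling, ← fromBlocks_diagonal, ← smul_one_eq_diagonal,
    conjTranspose_fromRows_eq_fromCols_conjTranspose, fromCols_mul_fromBlocks,
    fromCols_mul_fromRows, Matrix.mul_zero, add_zero, zero_add, one_smul, Matrix.mul_one,
    conjTranspose_replicateRow, star_trivial, Matrix.mul_smul, Matrix.smul_mul, ← vecMulVec_eq,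
    conjTranspose_smul, conjTranspose_one, smul_vecMulVec, vecMulVec_smul]
  module

theorem schurComplement_symmetrizedTimeMatrix {ρ c : ℝ} (lam : ℝ) (H : n → ℝ) (hρ : ρ ≠ 0)
    (hc : c ≠ 0) :
    ρ • 1 - (velocityCoupling ρ c lam H)ᴴ * (thermoMagneticBlock n ρ c)⁻¹ *
        velocityCoupling ρ c lam H =
      (ρ * (1 - ρ * lam ^ 2)) • (1 : Matrix n n ℝ) - (ρ * lam ^ 2 / c ^ 2) • vecMulVec H H := by
  have hcoeff : ρ * c ^ 2 * (lam / c ^ 2) ^ 2 = ρ * lam ^ 2 / c ^ 2 := by field_simp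
  rw [inv_thermoMagneticBlock hρ hc, conjTranspose_velocityCoupling_mul_diagonal_mul, hcoeff]
  module

theorem stmt_4_general [Nonempty n] {ρ c : ℝ} (lam : ℝ) (H : n → ℝ) (hρ : 0 < ρ) (hc : c ≠ 0) :
    (symmetrizedTimeMatrix ρ c lam H).PosDef ↔
      ρ * lam ^ 2 < 1 / (1 + (H ⬝ᵥ H) / ρ / c ^ 2) := by
  have hA := posDef_thermoMagneticBlock (n := n) hρ hc
  have hHH : 0 ≤ H ⬝ᵥ H := dotProduct_star_self_nonneg H
  have : Invertible (thermoMagneticBlock n ρ c) := hA.isUnit.invertible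
  rw [symmetrizedTimeMatrix, posDef_fromBlocks₁₁_iff _ _ hA,
    schurComplement_symmetrizedTimeMatrix lam H hρ.ne' hc,
    posDef_smul_one_sub_smul_vecMulVec_iff (by positivity),
    lt_one_div_one_add_div_div_iff hHH hρ (by positivity)]

/-- The position in the block ordering of each of the planar unknowns `(p, u₁, u₂, H₁, H₂, S)`. -/
def planarVariableEquiv : Fin 6 ≃ (Unit ⊕ Fin 2 ⊕ Unit) ⊕ Fin 2 where
  toFun := ![.inl (.inl ()), .inr 0, .inr 1, .inl (.inr (.inl 0)), .inl (.inr (.inl 1)),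
    .inl (.inr (.inr ()))]
  invFun := Sum.elim (Sum.elim (fun _ => 0) (Sum.elim ![3, 4] fun _ => 5)) ![1, 2]
  left_inv := by decide
  right_inv := by decide

theorem symmetrizedTimeMatrix_submatrix_planarVariableEquiv (ρ c H₁ H₂ lam : ℝ) :
    (symmetrizedTimeMatrix ρ c lam ![H₁, H₂]).submatrix planarVariableEquiv planarVariableEquiv =
      !![1 / (ρ * c ^ 2), lam * H₁ / c ^ 2, lam * H₂ / c ^ 2, 0, 0, 0;
         lam * H₁ / c ^ 2, ρ, 0, -(ρ * lam), 0, 0;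
         lam * H₂ / c ^ 2, 0, ρ, 0, -(ρ * lam), 0;
         0, -(ρ * lam), 0, 1, 0, 0;
         0, 0, -(ρ * lam), 0, 1, 0;
         0, 0, 0, 0, 0, 1] := by
  ext i j
  fin_cases i <;> fin_cases j <;>
    simp [symmetrizedTimeMatrix, thermoMagneticBlock, velocityCoupling, planarVariableEquiv,
      mul_div_right_comm]

end MHD

/-- Hyperbolicity of the secondary Friedrichs symmetrization (equations
(4.17)–(4.18) of the paper): the matrix `B₀ = S(U)A₀(U)` is positive definite
if and only if `ρλ² < 1/(1 + c_A²/c²)`, where `c_A² = |H|²/ρ`. -/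
theorem stmt_4 (ρ c H₁ H₂ lam : ℝ) (hρ : 0 < ρ) (hc : 0 < c)
    (cA2 : ℝ) (hcA2 : cA2 = (H₁ ^ 2 + H₂ ^ 2) / ρ)
    (B₀ : Matrix (Fin 6) (Fin 6) ℝ)
    (hB₀ : B₀ =
      !![1 / (ρ * c ^ 2), lam * H₁ / c ^ 2, lam * H₂ / c ^ 2, 0, 0, 0;
         lam * H₁ / c ^ 2, ρ, 0, -(ρ * lam), 0, 0;
         lam * H₂ / c ^ 2, 0, ρ, 0, -(ρ * lam), 0;
         0, -(ρ * lam), 0, 1, 0, 0;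
         0, 0, -(ρ * lam), 0, 1, 0;
         0, 0, 0, 0, 0, 1]) :
    B₀.PosDef ↔ ρ * lam ^ 2 < 1 / (1 + cA2 / c ^ 2) := by
  subst hB₀ hcA2
  rw [← symmetrizedTimeMatrix_submatrix_planarVariableEquiv, posDef_submatrix_equiv_iff,
    stmt_4_general lam _ hρ hc.ne', vec2_dotProduct', ← sq, ← sq]
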